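/- Let (G,λ) = (G₁, …, G_T) be a temporal graph on n vertices, let Δ ≤ T, and let t ∈ [T] be a time slot such that every Δ-window containing t contains at least n² time slots t' ≠ t with G_{t'} = G_t. Let (G',λ') be the temporal graph obtained from (G,λ) by replacing the snapshot at time slot t with the trivial (edgeless) snapshot. Then, for every k ≥ 2, (G,λ) admits a proper sliding Δ-window temporal k-coloring if and only if (G',λ') admits a proper sliding Δ-window temporal k-coloring. -/

import Mathlib

/-- `φ` is a proper sliding `Δ`-window temporal `k`-coloring of the temporal
graph with snapshots `Gs` over the time slots `[a,b]`. -/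
def IsSWTempColoring {W : Type*} {k : ℕ} (Gs : ℕ → SimpleGraph W)
    (a b Δ : ℕ) (φ : W → ℕ → Fin k) : Prop :=
  ∀ t, a ≤ t → t + Δ - 1 ≤ b →
    ∀ u v : W, (∃ i ∈ Finset.Icc t (t + Δ - 1), (Gs i).Adj u v) →
      ∃ i ∈ Finset.Icc t (t + Δ - 1), (Gs i).Adj u v ∧ φ u i ≠ φ v i

/-!
Given a coloring and a window `I`, call a slot flanked in `I` if every edge properly colored there
is also properly colored at an earlier and at a later slot of `I`. Every window through a flanked
slot then contains one of these two other slots, so the slot can be recolored at will. An edge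
prevents at most two slots of `I` from being flanked, namely the first and the last one at which it
is properly colored. So if `I` contains `t` and at least `2 |E(G_t)|` other copies of `G_t`, then
`t` or one of the copies is flanked in `I`.

Take a proper coloring for which the set of slots colored differently from `t` is minimal under
inclusion. Then a flanked slot is colored exactly like `t`. So in each window through `t`, either
`t` is itself flanked, or a copy of `G_t` colored like `t` takes over its role.
-/

open Function Set

section Extremes

variable {ι α : Type*}

lemma encard_setOf_exists_le {R : ι → α → Prop} (hR : Relator.RightUnique R) (E : Set ι) :
    {x | ∃ e ∈ E, R e x}.encard ≤ E.encard := by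
  choose f hfE hf using fun x : {x | ∃ e ∈ E, R e x} => x.2
  have hinj : Injective fun x => (⟨f x, hfE x⟩ : E) := by
    intro x y hxy
    have hfxy : f x = f y := congrArg Subtype.val hxy
    exact Subtype.ext (hR (hf x) (hfxy ▸ hf y))
  exact Embedding.encard_le ⟨_, hinj⟩

lemma encard_setOf_isLeast_or_isGreatest_le [PartialOrder α] (S : ι → Set α) (E : Set ι) :
    {x | ∃ e ∈ E, IsLeast (S e) x ∨ IsGreatest (S e) x}.encard ≤ 2 * E.encard := by
  have hunion : {x | ∃ e ∈ E, IsLeast (S e) x ∨ IsGreatest (S e) x} =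
      {x | ∃ e ∈ E, IsLeast (S e) x} ∪ {x | ∃ e ∈ E, IsGreatest (S e) x} := by
    ext x
    simp only [mem_union, mem_ofPred_eq, and_or_left, exists_or]
  rw [hunion, two_mul]
  exact (encard_union_le _ _).trans <| add_le_add
    (encard_setOf_exists_le (fun _ _ _ h h' => h.unique h') E)
    (encard_setOf_exists_le (fun _ _ _ h h' => h.unique h') E)

end Extremes

lemma two_mul_encard_edgeSet_le {V : Type*} [Fintype V] (G : SimpleGraph V) :
    2 * G.edgeSet.encard ≤ (Fintype.card V ^ 2 : ℕ) := by
  classical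
  have hcard : 2 * G.edgeFinset.card ≤ Fintype.card V ^ 2 := by
    have hchoose := Nat.mul_le_mul_left 2 (G.card_edgeFinset_le_card_choose_two)
    rw [Nat.choose_two_right] at hchoose
    refine (hchoose.trans (Nat.mul_div_le _ 2)).trans ?_
    rw [sq]
    exact Nat.mul_le_mul_left _ (Nat.sub_le _ 1)
  rw [← G.coe_edgeFinset, encard_coe_eq_coe_finsetCard]
  exact_mod_cast hcard

section TemporalColoring

variable {V : Type*} {k : ℕ} {Gs : ℕ → SimpleGraph V} {φ ψ : V → ℕ → Fin k} {a b Δ t : ℕ}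

/-- The time slots at which the edge `e` is temporally properly colored by `φ`. -/
def properSlots (Gs : ℕ → SimpleGraph V) (φ : V → ℕ → Fin k) (e : Sym2 V) : Set ℕ :=
  {i | e ∈ (Gs i).edgeSet ∧ ¬ (e.map (φ · i)).IsDiag}

lemma mem_properSlots_congr {i j : ℕ} (hG : Gs i = Gs j) (hφ : ∀ v, ψ v i = φ v j) (e : Sym2 V) :
    i ∈ properSlots Gs ψ e ↔ j ∈ properSlots Gs φ e := by
  simp only [properSlots, mem_ofPred_eq, hG, hφ]

lemma isSWTempColoring_iff_properSlots :
    IsSWTempColoring Gs a b Δ φ ↔ ∀ s, a ≤ s → s + Δ - 1 ≤ b → ∀ e,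
      (∃ i ∈ Icc s (s + Δ - 1), e ∈ (Gs i).edgeSet) →
        (Icc s (s + Δ - 1) ∩ properSlots Gs φ e).Nonempty := by
  simp only [IsSWTempColoring, Sym2.forall, properSlots, Set.Nonempty, mem_inter_iff, mem_ofPred_eq,
    SimpleGraph.mem_edgeSet, Sym2.map_mk, Sym2.mk_isDiag_iff, Finset.mem_Icc, mem_Icc, ne_eq]

lemma mem_edgeSet_update_bot {e : Sym2 V} {i : ℕ} :
    e ∈ (update Gs t ⊥ i).edgeSet ↔ i ≠ t ∧ e ∈ (Gs i).edgeSet := by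
  obtain rfl | hit := eq_or_ne i t
  · simp
  · simp [hit]

lemma properSlots_update_bot (e : Sym2 V) :
    properSlots (update Gs t ⊥) φ e = properSlots Gs φ e \ {t} := by
  ext i
  simp only [properSlots, mem_ofPred_eq, mem_edgeSet_update_bot, mem_sdiff, mem_singleton_iff]
  tauto

/-- The slot `j` is flanked in the window `I` if each edge properly colored at `j` is also properly
colored at slots of `I` before and after `j`, so that no window through `j` depends on `j`. -/
def IsFlankedIn (Gs : ℕ → SimpleGraph V) (φ : V → ℕ → Fin k) (I : Set ℕ) (j : ℕ) : Prop :=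
  ∀ e, j ∈ properSlots Gs φ e →
    (∃ i ∈ I ∩ properSlots Gs φ e, i < j) ∧ ∃ i ∈ I ∩ properSlots Gs φ e, j < i

lemma exists_isFlankedIn (φ : V → ℕ → Fin k) {G : SimpleGraph V} {C I : Set ℕ} (hCI : C ⊆ I)
    (hC : ∀ i ∈ C, Gs i = G) (hcard : 2 * G.edgeSet.encard < C.encard) :
    ∃ j ∈ C, IsFlankedIn Gs φ I j := by
  let S : Sym2 V → Set ℕ := fun e => I ∩ properSlots Gs φ e
  obtain ⟨j, hjC, hj⟩ :
      ∃ j ∈ C, j ∉ {j | ∃ e ∈ G.edgeSet, IsLeast (S e) j ∨ IsGreatest (S e) j} :=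
    not_subset.1 fun hsub => hcard.not_ge <|
      (encard_le_encard hsub).trans (encard_setOf_isLeast_or_isGreatest_le S G.edgeSet)
  refine ⟨j, hjC, fun e he => ?_⟩
  have heG : e ∈ G.edgeSet := hC j hjC ▸ he.1
  have hjS : j ∈ S e := ⟨hCI hjC, he⟩
  constructor
  · by_contra! hleast
    exact hj ⟨e, heG, .inl ⟨hjS, hleast⟩⟩
  · by_contra! hgreatest
    exact hj ⟨e, heG, .inr ⟨hjS, hgreatest⟩⟩

lemma IsFlankedIn.exists_ne_mem_properSlots {s r j : ℕ} {e : Sym2 V}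
    (hj : IsFlankedIn Gs φ (Icc s (s + Δ - 1)) j) (hjr : j ∈ Icc r (r + Δ - 1))
    (he : j ∈ properSlots Gs φ e) : ∃ i ∈ Icc r (r + Δ - 1), i ≠ j ∧ i ∈ properSlots Gs φ e := by
  obtain ⟨⟨i, ⟨hi, hie⟩, hij⟩, i', ⟨hi', hie'⟩, hji'⟩ := hj e he
  rw [mem_Icc] at hjr hi hi'
  by_cases hri : r ≤ i
  · exact ⟨i, ⟨hri, by omega⟩, hij.ne, hie⟩
  · exact ⟨i', ⟨by omega, by omega⟩, hji'.ne', hie'⟩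

lemma IsSWTempColoring.recolor_of_isFlankedIn {s j : ℕ} (hφ : IsSWTempColoring Gs a b Δ φ)
    (hj : IsFlankedIn Gs φ (Icc s (s + Δ - 1)) j) (hψ : ∀ i ≠ j, ∀ v, ψ v i = φ v i) :
    IsSWTempColoring Gs a b Δ ψ := by
  rw [isSWTempColoring_iff_properSlots] at hφ ⊢
  intro r har hrb e he
  obtain ⟨i, hir, hij, hie⟩ :
      ∃ i ∈ Icc r (r + Δ - 1), i ≠ j ∧ i ∈ properSlots Gs φ e := by
    obtain ⟨i, hir, hie⟩ := hφ r har hrb e he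
    obtain rfl | hij := eq_or_ne i j
    · exact hj.exists_ne_mem_properSlots hir hie
    · exact ⟨i, hir, hij, hie⟩
  exact ⟨i, hir, (mem_properSlots_congr rfl (hψ i hij) e).2 hie⟩

open Classical in
/-- The time slots of `[a,b]` that `φ` does not color exactly like the slot `t`: the set
minimized in the extremal argument. -/
noncomputable def discordantSlots (a b t : ℕ) (φ : V → ℕ → Fin k) : Finset ℕ :=
  {i ∈ Finset.Icc a b | ∃ v, φ v i ≠ φ v t}

lemma mem_discordantSlots {i : ℕ} :
    i ∈ discordantSlots a b t φ ↔ i ∈ Icc a b ∧ ∃ v, φ v i ≠ φ v t := by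
  simp only [discordantSlots, Finset.mem_filter, Finset.mem_Icc, mem_Icc]

lemma eq_of_isFlankedIn_of_minimalFor {s j : ℕ}
    (hφ : MinimalFor (IsSWTempColoring Gs a b Δ) (discordantSlots a b t) φ)
    (hj : IsFlankedIn Gs φ (Icc s (s + Δ - 1)) j) (hjab : j ∈ Icc a b) (v : V) :
    φ v j = φ v t := by
  by_contra hv
  let ψ : V → ℕ → Fin k := fun v => update (φ v) j (φ v t)
  have hψj (v) : ψ v j = φ v t := update_self ..
  have hψ (i) (hij : i ≠ j) (v) : ψ v i = φ v i := update_of_ne hij ..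
  have hψt (v) : ψ v t = φ v t := by
    obtain rfl | htj := eq_or_ne t j
    exacts [hψj v, hψ t htj v]
  have hsub : discordantSlots a b t ψ ⊆ discordantSlots a b t φ := by
    intro i hi
    obtain ⟨hiab, w, hw⟩ := mem_discordantSlots.1 hi
    have hij : i ≠ j := by
      rintro rfl
      exact hw ((hψj w).trans (hψt w).symm)
    exact mem_discordantSlots.2 ⟨hiab, w, by rwa [hψ i hij, hψt] at hw⟩
  have hjψ : j ∈ discordantSlots a b t ψ :=
    hφ.le_of_le (hφ.prop.recolor_of_isFlankedIn hj hψ) hsub (mem_discordantSlots.2 ⟨hjab, v, hv⟩)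
  obtain ⟨-, w, hw⟩ := mem_discordantSlots.1 hjψ
  exact hw ((hψj w).trans (hψt w).symm)

lemma exists_isFlankedIn_copy (φ : V → ℕ → Fin k) {p q : ℕ} (ht : t ∈ Icc p q)
    (hcard : 2 * (Gs t).edgeSet.encard ≤ {i ∈ Icc p q | i ≠ t ∧ Gs i = Gs t}.encard) :
    ∃ j ∈ Icc p q, Gs j = Gs t ∧ IsFlankedIn Gs φ (Icc p q) j := by
  set C := {i ∈ Icc p q | i ≠ t ∧ Gs i = Gs t}
  have hCfin : C.Finite := (finite_Icc p q).subset (sep_subset _ _)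
  have hCI : insert t C ⊆ Icc p q := insert_subset ht (sep_subset _ _)
  have hCG : ∀ i ∈ insert t C, Gs i = Gs t := forall_mem_insert.2 ⟨rfl, fun i hi => hi.2.2⟩
  have hlt : 2 * (Gs t).edgeSet.encard < (insert t C).encard := by
    rw [encard_insert_of_notMem fun htC => htC.2.1 rfl]
    exact hcard.trans_lt ((ENat.lt_add_one_iff hCfin.encard_lt_top.ne).2 le_rfl)
  obtain ⟨j, hj, hflanked⟩ := exists_isFlankedIn φ hCI hCG hlt
  exact ⟨j, hCI hj, hCG j hj, hflanked⟩

lemma isSWTempColoring_update_bot_of_minimalFor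
    (hφ : MinimalFor (IsSWTempColoring Gs a b Δ) (discordantSlots a b t) φ)
    (hflanked : ∀ s, a ≤ s → s + Δ - 1 ≤ b → t ∈ Icc s (s + Δ - 1) →
      ∃ j ∈ Icc s (s + Δ - 1), Gs j = Gs t ∧ IsFlankedIn Gs φ (Icc s (s + Δ - 1)) j) :
    IsSWTempColoring (update Gs t ⊥) a b Δ φ := by
  rw [isSWTempColoring_iff_properSlots]
  rintro s has hsb e ⟨i, his, hie⟩
  obtain ⟨m, hms, hme⟩ := isSWTempColoring_iff_properSlots.1 hφ.prop s has hsb e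
    ⟨i, his, (mem_edgeSet_update_bot.1 hie).2⟩
  suffices ∃ l ∈ Icc s (s + Δ - 1), l ≠ t ∧ l ∈ properSlots Gs φ e by
    obtain ⟨l, hls, hlt, hle⟩ := this
    exact ⟨l, hls, properSlots_update_bot e ▸ ⟨hle, hlt⟩⟩
  obtain rfl | hmt := eq_or_ne m t
  · obtain ⟨j, hjs, hjG, hj⟩ := hflanked s has hsb hms
    obtain rfl | hjm := eq_or_ne j m
    · exact hj.exists_ne_mem_properSlots hjs hme
    · have hjφ := eq_of_isFlankedIn_of_minimalFor hφ hj ⟨has.trans hjs.1, hjs.2.trans hsb⟩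
      exact ⟨j, hjs, hjm, (mem_properSlots_congr hjG hjφ e).2 hme⟩
  · exact ⟨m, hms, hmt, hme⟩

lemma IsSWTempColoring.of_update_bot (hφ : IsSWTempColoring (update Gs t ⊥) a b Δ φ)
    (hcopy : ∀ s, a ≤ s → s + Δ - 1 ≤ b → t ∈ Icc s (s + Δ - 1) → (Gs t).edgeSet.Nonempty →
      ∃ j ∈ Icc s (s + Δ - 1), j ≠ t ∧ Gs j = Gs t) :
    IsSWTempColoring Gs a b Δ φ := by
  rw [isSWTempColoring_iff_properSlots] at hφ ⊢
  rintro s has hsb e ⟨i, his, hie⟩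
  have he : ∃ j ∈ Icc s (s + Δ - 1), e ∈ (update Gs t ⊥ j).edgeSet := by
    obtain rfl | hit := eq_or_ne i t
    · obtain ⟨j, hjs, hji, hjG⟩ := hcopy s has hsb his ⟨e, hie⟩
      exact ⟨j, hjs, mem_edgeSet_update_bot.2 ⟨hji, hjG ▸ hie⟩⟩
    · exact ⟨i, his, mem_edgeSet_update_bot.2 ⟨hit, hie⟩⟩
  refine (hφ s has hsb e he).mono (inter_subset_inter_right _ ?_)
  exact properSlots_update_bot e ▸ sdiff_subset

end TemporalColoring

theorem stmt_11_general {V : Type*} (Gs : ℕ → SimpleGraph V) (a b Δ t : ℕ)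
    (hrep : ∀ s, a ≤ s → s + Δ - 1 ≤ b → t ∈ Icc s (s + Δ - 1) →
      2 * (Gs t).edgeSet.encard ≤
        {t' ∈ Icc s (s + Δ - 1) | t' ≠ t ∧ Gs t' = Gs t}.encard) (k : ℕ) :
    (∃ φ : V → ℕ → Fin k, IsSWTempColoring Gs a b Δ φ) ↔
      ∃ φ : V → ℕ → Fin k, IsSWTempColoring (update Gs t ⊥) a b Δ φ := by
  constructor
  · intro hcolorable
    obtain ⟨φ, hφ⟩ := exists_minimalFor_of_wellFoundedLT _ (discordantSlots a b t) hcolorable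
    exact ⟨φ, isSWTempColoring_update_bot_of_minimalFor hφ fun s has hsb hts =>
      exists_isFlankedIn_copy φ hts (hrep s has hsb hts)⟩
  · rintro ⟨φ, hφ⟩
    refine ⟨φ, hφ.of_update_bot fun s has hsb hts hedge => ?_⟩
    have hpos : 0 < 2 * (Gs t).edgeSet.encard :=
      CanonicallyOrderedAdd.mul_pos.2 ⟨two_pos, encard_pos.2 hedge⟩
    exact encard_pos.1 (hpos.trans_le (hrep s has hsb hts))

/-- let `t ∈ [T]` be a time slot such that every `Δ`-window
containing `t` contains at least `n²` other time slots `t' ≠ t` with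
`G_{t'} = G_t`.  If `(G',λ')` is obtained from `(G,λ)` by replacing the
snapshot at `t` with the trivial (edgeless) snapshot, then for every `k ≥ 2`,
`(G,λ)` admits a proper sliding `Δ`-window temporal `k`-coloring iff
`(G',λ')` does. -/
theorem stmt_11 {V : Type*} [Fintype V] (Gs : ℕ → SimpleGraph V) (T Δ : ℕ)
    (hΔ : 1 ≤ Δ) (hΔT : Δ ≤ T) (t : ℕ) (ht : t ∈ Finset.Icc 1 T)
    (hrep : ∀ s, 1 ≤ s → s + Δ - 1 ≤ T → s ≤ t → t ≤ s + Δ - 1 →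
      Fintype.card V ^ 2 ≤
        {t' ∈ Set.Icc s (s + Δ - 1) | t' ≠ t ∧ Gs t' = Gs t}.ncard)
    (k : ℕ) (hk : 2 ≤ k) :
    (∃ φ : V → ℕ → Fin k, IsSWTempColoring Gs 1 T Δ φ) ↔
      (∃ φ : V → ℕ → Fin k,
        IsSWTempColoring (Function.update Gs t ⊥) 1 T Δ φ) :=
  stmt_11_general Gs 1 T Δ t (fun s hs hsT hts => (two_mul_encard_edgeSet_le _).trans <|
    (Nat.cast_le.2 (hrep s hs hsT hts.1 hts.2)).trans (ncard_le_encard _)) k
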